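/- Let ν = (ν_1,…,ν_t) be a composition of n, let λ be the conjugate (transpose) partition of the weakly decreasing rearrangement of ν, and let 1 ≤ s ≤ n−1. Let (i_1,j_1),…,(i_s,j_s) be pairs in {1,…,n}² such that i_1,…,i_s are pairwise distinct, j_1,…,j_s are pairwise distinct, and for each l either i_l = j_l, or i_l < j_l and block(i_l) ≠ block(j_l). Then the number of indices l with i_l ≠ j_l is at most d_{λ,s}. -/

import Mathlib

/-- `d_{λ,i} = i - ∑_{j = n - i + 1}^{n} λ_j` (with `0`-indexed parts `λ_j = l (j-1)`). -/
def dPart (n : ℕ) (l : ℕ → ℕ) (i : ℕ) : ℕ :=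
  i - ∑ j ∈ Finset.Ico (n - i) n, l j

/-- Positions `0, …, n-1` are grouped into consecutive blocks of sizes `ν 0, …, ν (t-1)`.
`SameBlock ν t r c` means positions `r` and `c` lie in the same block. -/
def SameBlock (ν : ℕ → ℕ) (t : ℕ) (r c : ℕ) : Prop :=
  ∃ u < t, (∑ w ∈ Finset.range u, ν w) ≤ r ∧ r < (∑ w ∈ Finset.range (u + 1), ν w) ∧
    (∑ w ∈ Finset.range u, ν w) ≤ c ∧ c < (∑ w ∈ Finset.range (u + 1), ν w)

/-- The conjugate (transpose) partition of the weakly decreasing rearrangement of the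
composition `(ν 0, …, ν (t-1))`: its `0`-indexed `j`-th part is `#{u < t | ν u ≥ j + 1}`. -/
def conjOf (ν : ℕ → ℕ) (t : ℕ) : ℕ → ℕ :=
  fun j => ((Finset.range t).filter (fun u => j + 1 ≤ ν u)).card

/-!
View the `s` pairs as a partial injection on the `n` positions, and let `k` of them be nondiagonal,
so that there are `s - k` diagonal positions. Fix a block. From each pair choose the row if it lies
in an earlier block, and the column otherwise. Since a nondiagonal pair goes from a block to a later
one, the `s` chosen positions are distinct, and those in the fixed block are diagonal. Hence the
block of size `ν u` contains at most `min (ν u) (n - s)` nondiagonal positions. Summing over the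
blocks gives `n - (s - k) ≤ ∑ u, min (ν u) (n - s) = λ_1 + ⋯ + λ_{n-s}`, which rearranges to
`k ≤ d_{λ,s}`.
-/

open Finset

section ConjugatePartition

variable (ν : ℕ → ℕ) (t : ℕ)

lemma sum_range_conjOf_eq_sum_min (m : ℕ) :
    ∑ j ∈ range m, conjOf ν t j = ∑ u ∈ range t, min (ν u) m := by
  simp only [conjOf, card_filter]
  rw [sum_comm]
  refine sum_congr rfl fun u _ => ?_
  have columns_of_row : {j ∈ range m | j + 1 ≤ ν u} = range (min (ν u) m) := by
    ext j
    simp only [mem_filter, mem_range]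
    omega
  rw [← card_filter, columns_of_row, card_range]

lemma sum_range_conjOf_eq_sum :
    ∑ j ∈ range (∑ u ∈ range t, ν u), conjOf ν t j = ∑ u ∈ range t, ν u := by
  rw [sum_range_conjOf_eq_sum_min]
  exact sum_congr rfl fun u hu => min_eq_left (single_le_sum (fun _ _ => Nat.zero_le _) hu)

lemma le_dPart {n s k : ℕ} {l : ℕ → ℕ} (hl : ∑ j ∈ range n, l j = n)
    (hk : n + k ≤ s + ∑ j ∈ range (n - s), l j) : k ≤ dPart n l s := by
  have hsplit := sum_range_add_sum_Ico l (Nat.sub_le n s)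
  unfold dPart
  omega

end ConjugatePartition

section PartialInjection

variable {α ι : Type*} [DecidableEq α] [Fintype ι]

/-- The positions `x` for which `(x, x)` is one of the pairs `(a l, b l)`. -/
def diagonalPositions (a b : ι → α) : Finset α :=
  image a {l | a l = b l}

lemma card_diagonalPositions_add_card_ne {a : ι → α} (ha : Function.Injective a) (b : ι → α) :
    #(diagonalPositions a b) + #{l | a l ≠ b l} = Fintype.card ι := by
  rw [diagonalPositions, card_image_of_injective _ ha, card_filter_add_card_filter_not, card_univ]

lemma card_fiber_compl_diagonalPositions_add_card_le {κ : Type*} [Fintype α] [LinearOrder κ]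
    {β : α → κ} {a b : ι → α} (ha : Function.Injective a) (hb : Function.Injective b)
    (hab : ∀ l, a l = b l ∨ β (a l) < β (b l)) (u : κ) :
    #{x ∈ (diagonalPositions a b)ᶜ | β x = u} + Fintype.card ι ≤ Fintype.card α := by
  have hle : ∀ l, β (a l) ≤ β (b l) := fun l => (hab l).elim (fun h => h ▸ le_rfl) le_of_lt
  let chosen : ι → α := fun l => if β (a l) < u then a l else b l
  have chosen_injective : Function.Injective chosen := by
    intro l m h
    simp only [chosen] at h
    split_ifs at h with hl hm hm
    · exact ha h
    · exact absurd (h ▸ hl) (not_lt.2 ((not_lt.1 hm).trans (hle m)))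
    · exact absurd (h ▸ hm) (not_lt.2 ((not_lt.1 hl).trans (hle l)))
    · exact hb h
  have chosen_diagonal : ∀ l, β (chosen l) = u → chosen l ∈ diagonalPositions a b := by
    intro l h
    simp only [chosen] at h ⊢
    split_ifs at h ⊢ with hl
    · exact absurd h hl.ne
    · have heq : a l = b l := (hab l).resolve_right fun hlt => hl (h ▸ hlt)
      exact heq ▸ mem_image_of_mem a (mem_filter.2 ⟨mem_univ l, heq⟩)
  have hdisj : Disjoint {x ∈ (diagonalPositions a b)ᶜ | β x = u} (univ.image chosen) := by
    simp only [disjoint_right, mem_image, mem_univ, true_and, mem_filter, mem_compl]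
    rintro _ ⟨l, rfl⟩ ⟨hnot, hu⟩
    exact hnot (chosen_diagonal l hu)
  rw [← card_univ (α := ι), ← card_image_of_injective univ chosen_injective,
    ← card_union_of_disjoint hdisj]
  exact card_le_univ _

theorem card_offdiagonal_le_dPart_general [Fintype α] {t : ℕ} {ν : ℕ → ℕ} {β : α → ℕ}
    (hβ : ∀ x, β x < t) (hν : ∀ u < t, #{x | β x = u} = ν u) {a b : ι → α}
    (ha : Function.Injective a) (hb : Function.Injective b)
    (hab : ∀ l, a l = b l ∨ β (a l) < β (b l)) :
    #{l | a l ≠ b l} ≤ dPart (Fintype.card α) (conjOf ν t) (Fintype.card ι) := by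
  have hsum : ∑ u ∈ range t, ν u = Fintype.card α := by
    rw [← card_univ, card_eq_sum_card_fiberwise fun x _ => mem_coe.2 (mem_range.2 (hβ x))]
    exact sum_congr rfl fun u hu => (hν u (mem_range.1 hu)).symm
  have hcompl : #(diagonalPositions a b)ᶜ ≤
      ∑ j ∈ range (Fintype.card α - Fintype.card ι), conjOf ν t j := by
    rw [sum_range_conjOf_eq_sum_min,
      card_eq_sum_card_fiberwise fun x _ => mem_coe.2 (mem_range.2 (hβ x))]
    refine sum_le_sum fun u hu => le_min ?_ (Nat.le_sub_of_add_le
      (card_fiber_compl_diagonalPositions_add_card_le ha hb hab u))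
    rw [← hν u (mem_range.1 hu)]
    exact card_le_card (filter_subset_filter _ (subset_univ _))
  have hdiag := card_diagonalPositions_add_card_ne ha b
  have htotal := card_add_card_compl (diagonalPositions a b)
  exact le_dPart (hsum ▸ sum_range_conjOf_eq_sum ν t) (by omega)

end PartialInjection

section BlockIndex

variable {ν : ℕ → ℕ} {t : ℕ}

/-- The index of the block containing the position `r`, as the greatest `u ≤ t` for which the block
`u` starts at or before `r`; positions beyond the last block get the index `t`. -/
def blockIndex (ν : ℕ → ℕ) (t r : ℕ) : ℕ :=
  Nat.findGreatest (fun u => ∑ w ∈ range u, ν w ≤ r) t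

lemma le_blockIndex_iff {u r : ℕ} (hu : u ≤ t) :
    u ≤ blockIndex ν t r ↔ ∑ w ∈ range u, ν w ≤ r := by
  refine ⟨fun h => ?_, fun h => Nat.le_findGreatest hu h⟩
  have hstart : ∑ w ∈ range (blockIndex ν t r), ν w ≤ r :=
    Nat.findGreatest_spec (P := fun u => ∑ w ∈ range u, ν w ≤ r) (Nat.zero_le t) (by simp)
  exact (sum_le_sum_of_subset (range_mono h)).trans hstart

lemma blockIndex_lt_iff {u r : ℕ} (hu : u ≤ t) :
    blockIndex ν t r < u ↔ r < ∑ w ∈ range u, ν w := by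
  rw [← not_le, le_blockIndex_iff hu, not_le]

lemma blockIndex_eq_iff {u r : ℕ} (hu : u < t) :
    blockIndex ν t r = u ↔ ∑ w ∈ range u, ν w ≤ r ∧ r < ∑ w ∈ range (u + 1), ν w := by
  rw [← le_blockIndex_iff hu.le, ← blockIndex_lt_iff (Nat.succ_le_of_lt hu)]
  omega

lemma blockIndex_mono : Monotone (blockIndex ν t) := fun _ _ hrc =>
  Nat.findGreatest_mono_left (fun _ hu => hu.trans hrc) t

lemma sameBlock_of_blockIndex_eq {r c : ℕ} (hr : r < ∑ w ∈ range t, ν w)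
    (h : blockIndex ν t r = blockIndex ν t c) : SameBlock ν t r c := by
  have hlt := (blockIndex_lt_iff le_rfl).2 hr
  obtain ⟨hr₁, hr₂⟩ := (blockIndex_eq_iff hlt).1 rfl
  obtain ⟨hc₁, hc₂⟩ := (blockIndex_eq_iff hlt).1 h.symm
  exact ⟨_, hlt, hr₁, hr₂, hc₁, hc₂⟩

lemma blockIndex_lt_blockIndex {r c : ℕ} (hr : r < ∑ w ∈ range t, ν w) (hrc : r ≤ c)
    (h : ¬ SameBlock ν t r c) : blockIndex ν t r < blockIndex ν t c :=
  (blockIndex_mono hrc).lt_of_ne (mt (sameBlock_of_blockIndex_eq hr) h)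

lemma card_blockIndex_eq {u : ℕ} (hu : u < t) :
    #{r : Fin (∑ w ∈ range t, ν w) | blockIndex ν t r = u} = ν u := by
  have hend : ∑ w ∈ range (u + 1), ν w ≤ ∑ w ∈ range t, ν w :=
    sum_le_sum_of_subset (range_mono hu)
  have block_eq_Ico : {r ∈ range (∑ w ∈ range t, ν w) | blockIndex ν t r = u} =
      Ico (∑ w ∈ range u, ν w) (∑ w ∈ range (u + 1), ν w) := by
    ext r
    rw [mem_filter, mem_range, mem_Ico, blockIndex_eq_iff hu]
    omega
  rw [card_filter, Fin.sum_univ_eq_sum_range (fun r => if blockIndex ν t r = u then 1 else 0),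
    ← card_filter, block_eq_Ico, Nat.card_Ico, sum_range_succ, Nat.add_sub_cancel_left]

end BlockIndex

/-- Let `ν` be a composition of `n` (positions `0, …, n-1` grouped into consecutive blocks),
`λ` the conjugate of its weakly decreasing rearrangement, and `1 ≤ s ≤ n - 1`. Given `s`
pairs `(a l, b l)` of positions with the `a l` pairwise distinct, the `b l` pairwise
distinct, and each pair either diagonal (`a l = b l`) or a possibly nonzero position of the
block strictly upper triangular matrices (`a l < b l` in different blocks), the number of
nondiagonal pairs is at most `d_{λ,s}`. -/
theorem card_offdiagonal_le_dPart (n t : ℕ) (ν : ℕ → ℕ) (hν : ∀ u < t, 0 < ν u)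
    (hsum : ∑ u ∈ Finset.range t, ν u = n) (s : ℕ) (hs1 : 1 ≤ s) (hsn : s < n)
    (a b : Fin s → ℕ) (han : ∀ l, a l < n) (hbn : ∀ l, b l < n)
    (hainj : Function.Injective a) (hbinj : Function.Injective b)
    (hcond : ∀ l, a l = b l ∨ (a l < b l ∧ ¬ SameBlock ν t (a l) (b l))) :
    (Finset.univ.filter (fun l => a l ≠ b l)).card ≤ dPart n (conjOf ν t) s := by
  subst hsum
  simpa using card_offdiagonal_le_dPart_general
    (fun r : Fin _ => (blockIndex_lt_iff le_rfl).2 r.isLt) (fun _ => card_blockIndex_eq)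
    (a := fun l => ⟨a l, han l⟩) (b := fun l => ⟨b l, hbn l⟩)
    (fun _ _ h => hainj (Fin.mk.inj h)) (fun _ _ h => hbinj (Fin.mk.inj h))
    (fun l => (hcond l).imp Fin.ext fun h => blockIndex_lt_blockIndex (han l) h.1.le h.2)
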